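/- With B and the layered directed graph C constructed as follows — n ≥ 2, L ≥ 1, bits K_{i,j}^{(ℓ)} ∈ {0,1} for 1 ≤ i ≤ j ≤ n−1 and ℓ ∈ {1,…,L}; B_{i,j+1} = ⊕_{ℓ} K_{i,j}^{(ℓ)} and all other entries of B zero; C has layers N_1, J_1, …, J_{n−1}, N_n with N_i having vertices {1,…,n}, J_i having vertices {1,…,n} ∪ {(i,j,ℓ)}, and edges: q∈N_i → q∈J_i always, i∈N_i → (i,j,ℓ)∈J_i iff K_{i,j}^{(ℓ)} = 1, q∈J_i → q∈N_{i+1} always, (i,j,ℓ)∈J_i → (j+1)∈N_{i+1} always — the following holds for every i ∈ {1, …, n}: the number of directed paths in C from vertex i in layer N_i to vertex n in layer N_n is congruent modulo 2 to the number of directed paths from vertex i to vertex n in the monotone DAG B. -/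

import Mathlib

/-!
Strengthened inductive claim inside Proposition 4.12 of the paper.  All indices are
0-based: vertex `p : Fin n` corresponds to the paper's vertex `p+1`, the bit `K i j ℓ`
(for `0 ≤ i ≤ j ≤ n-2`, `ℓ < L`) corresponds to the paper's `K_{i+1,j+1}^{(ℓ+1)}`, and
the paper's entry `B_{i,j+1} = ⊕_ℓ K_{i,j}^{(ℓ)}` becomes `B p q = (∑_ℓ K p (q-1) ℓ) % 2`
for `p < q`.

The layered graph `C` has `2n-1` layers `N_1, J_1, N_2, …, J_{n-1}, N_n`, indexed by
`t : Fin (2n-1)` (even `t = 2i` is layer `N_{i+1}`, odd `t = 2i+1` is layer `J_{i+1}`).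
Layer-`t` vertices are encoded as `(t, Sum.inl q)` for the vertices `{1, …, n}` and
`(t, Sum.inr (j, ℓ))` for the junction vertices `(i, j, ℓ)` of a `J`-layer (junction
vertices of a `J_i` layer all have first coordinate `i`, so only `(j, ℓ)` is recorded;
unused sum components are isolated, hence do not affect path counts).  Edges (a)–(d)
go only from each layer to the next, so the number of directed paths between two
vertices is `∑_{k≥1} (M^k)` of the adjacency matrix `M`; all such paths have length at
most `2n-2`.
-/

/-- The monotone-DAG adjacency matrix `B` determined by the bits `K`. -/
def monB (n L : ℕ) (K : ℕ → ℕ → ℕ → Bool) : Matrix (Fin n) (Fin n) ℕ :=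
  Matrix.of fun p q : Fin n =>
    if p < q then
      (∑ ℓ ∈ Finset.range L, if K (p : ℕ) ((q : ℕ) - 1) ℓ then 1 else 0) % 2
    else 0

/-- Adjacency matrix of the layered graph `C`: edges (a) `q ∈ N_i → q ∈ J_i` always,
(b) `i ∈ N_i → (i,j,ℓ) ∈ J_i` iff `K i j ℓ = 1` (with `i ≤ j ≤ n-2`, 0-indexed),
(c) `q ∈ J_i → q ∈ N_{i+1}` always, (d) `(i,j,ℓ) ∈ J_i → j+1 ∈ N_{i+1}` always. -/
def layerAdj (n L : ℕ) (K : ℕ → ℕ → ℕ → Bool) :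
    Matrix (Fin (2 * n - 1) × (Fin n ⊕ Fin n × Fin L))
      (Fin (2 * n - 1) × (Fin n ⊕ Fin n × Fin L)) ℕ :=
  Matrix.of fun p q =>
    if (q.1 : ℕ) = (p.1 : ℕ) + 1 then
      if (p.1 : ℕ) % 2 = 0 then
        -- `N`-layer (layer index `(p.1 : ℕ)/2`) to `J`-layer
        match p.2, q.2 with
        | Sum.inl a, Sum.inl b => if a = b then 1 else 0
        | Sum.inl a, Sum.inr (j, ℓ) =>
            if (a : ℕ) = (p.1 : ℕ) / 2 ∧ (a : ℕ) ≤ (j : ℕ) ∧ (j : ℕ) ≤ n - 2 ∧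
                K (a : ℕ) (j : ℕ) (ℓ : ℕ) then 1 else 0
        | _, _ => 0
      else
        -- `J`-layer to `N`-layer
        match p.2, q.2 with
        | Sum.inl a, Sum.inl b => if a = b then 1 else 0
        | Sum.inr (j, _), Sum.inl b => if (b : ℕ) = (j : ℕ) + 1 then 1 else 0
        | _, _ => 0
    else 0

theorem lay_step (n L : ℕ) (K : ℕ → ℕ → ℕ → Bool) (a : ℕ) (h : a < 2 * n - 1)
    (h' : a + 1 < 2 * n - 1) (x : Fin n ⊕ Fin n × Fin L)
    (v : Fin (2 * n - 1) × (Fin n ⊕ Fin n × Fin L) → ℕ) :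
    ∑ r, layerAdj n L K (⟨a, h⟩, x) r * v r =
      ∑ y, layerAdj n L K (⟨a, h⟩, x) (⟨a + 1, h'⟩, y) * v (⟨a + 1, h'⟩, y) := by
  rw [Fintype.sum_prod_type]
  rw [Finset.sum_eq_single (⟨a + 1, h'⟩ : Fin (2 * n - 1))]
  · intro b _ hb
    apply Finset.sum_eq_zero
    intro y _
    have : (b : ℕ) ≠ a + 1 := fun e => hb (Fin.ext e)
    simp [layerAdj, this]
  · simp

theorem lay_pow_zero (n L : ℕ) (K : ℕ → ℕ → ℕ → Bool) (k : ℕ) :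
    ∀ p q, (q.1 : ℕ) ≠ (p.1 : ℕ) + k → (layerAdj n L K ^ k) p q = 0 := by
  induction k with
  | zero =>
    intro p q h
    rw [pow_zero, Matrix.one_apply_ne]
    rintro rfl
    simp at h
  | succ k ih =>
    intro p q h
    rw [pow_succ', Matrix.mul_apply]
    apply Finset.sum_eq_zero
    intro r _
    by_cases hr : (r.1 : ℕ) = (p.1 : ℕ) + 1
    · rw [ih r q (by omega), mul_zero]
    · simp [layerAdj, hr]

theorem lay_two (n L : ℕ) (K : ℕ → ℕ → ℕ → Bool) (t : ℕ) (h : 2 * t < 2 * n - 1)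
    (h2 : 2 * (t + 1) < 2 * n - 1) (q : Fin n) (k : ℕ) (T) :
    (layerAdj n L K ^ (k + 2)) (⟨2 * t, h⟩, Sum.inl q) T =
      (layerAdj n L K ^ k) (⟨2 * (t + 1), h2⟩, Sum.inl q) T +
      if (q : ℕ) = t then ∑ b : Fin n, (if q < b then
        (∑ ℓ ∈ Finset.range L, if K (q : ℕ) ((b : ℕ) - 1) ℓ then 1 else 0) else 0) *
          (layerAdj n L K ^ k) (⟨2 * (t + 1), h2⟩, Sum.inl b) T else 0 := by
  have e1 : 2 * t + 1 < 2 * n - 1 := by omega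
  have hodd : (2 * t + 1) % 2 = 1 := by omega
  have hl : ∀ a : Fin n, (layerAdj n L K ^ (k + 1)) (⟨2 * t + 1, e1⟩, Sum.inl a) T =
      (layerAdj n L K ^ k) (⟨2 * (t + 1), h2⟩, Sum.inl a) T := by
    intro a
    rw [pow_succ', Matrix.mul_apply,
      lay_step n L K _ e1 h2 _ (fun r => (layerAdj n L K ^ k) r T), Fintype.sum_sum_type]
    simp [layerAdj, hodd]
    rfl
  have hr : ∀ j ℓ, (layerAdj n L K ^ (k + 1)) (⟨2 * t + 1, e1⟩, Sum.inr (j, ℓ)) T =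
      ∑ b : Fin n, if (b : ℕ) = (j : ℕ) + 1 then
      (layerAdj n L K ^ k) (⟨2 * (t + 1), h2⟩, Sum.inl b) T else 0 := by
    intro j ℓ
    rw [pow_succ', Matrix.mul_apply,
      lay_step n L K _ e1 h2 _ (fun r => (layerAdj n L K ^ k) r T), Fintype.sum_sum_type]
    simp [layerAdj, hodd]
    rfl
  rw [pow_succ', Matrix.mul_apply,
      lay_step n L K _ h e1 _ (fun r => (layerAdj n L K ^ (k + 1)) r T), Fintype.sum_sum_type]
  simp only [hl, Fintype.sum_prod_type, hr]
  congr 1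
  · simp [layerAdj]
  · split_ifs with hq
    · simp only [Finset.mul_sum]
      have : ∀ j : Fin n, ∑ ℓ : Fin L, ∑ b : Fin n,
          layerAdj n L K (⟨2 * t, h⟩, Sum.inl q) (⟨2 * t + 1, e1⟩, Sum.inr (j, ℓ)) *
          (if (b : ℕ) = (j : ℕ) + 1 then
            (layerAdj n L K ^ k) (⟨2 * (t + 1), h2⟩, Sum.inl b) T else 0) =
          ∑ b : Fin n, ∑ ℓ : Fin L, 
          layerAdj n L K (⟨2 * t, h⟩, Sum.inl q) (⟨2 * t + 1, e1⟩, Sum.inr (j, ℓ)) *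
          (if (b : ℕ) = (j : ℕ) + 1 then
            (layerAdj n L K ^ k) (⟨2 * (t + 1), h2⟩, Sum.inl b) T else 0) :=
        fun j => Finset.sum_comm
      simp only [this]
      rw [Finset.sum_comm]
      apply Finset.sum_congr rfl
      intro b _
      by_cases hb : (b : ℕ) = 0
      · have : ¬ q < b := by rw [Fin.lt_def]; omega
        simp [hb, this]
      · have hbl := b.isLt
        rw [Finset.sum_eq_single (⟨(b : ℕ) - 1, by omega⟩ : Fin n)]
        · have hb1 : (b : ℕ) = (b : ℕ) - 1 + 1 := by omega
          rw [Finset.sum_range, ← Finset.sum_mul]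
          have hb2 : (b : ℕ) - 1 ≤ n - 2 := by omega
          rw [if_pos hb1]
          congr 1
          by_cases hlt : q < b
          · have hlt' := hlt
            rw [Fin.lt_def] at hlt'
            have h3 : (q : ℕ) ≤ (b : ℕ) - 1 := by omega
            rw [hq] at h3
            rw [if_pos hlt]
            simp [layerAdj, Fin.le_def, -Fin.val_fin_le, hq, h3, hb2]
          · have hlt' := hlt
            rw [Fin.lt_def] at hlt'
            have h3 : ¬ (q : ℕ) ≤ (b : ℕ) - 1 := by omega
            rw [hq] at h3
            rw [if_neg hlt]
            simp [layerAdj, Fin.le_def, -Fin.val_fin_le, hq, h3]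
        · intro j _ hj
          have : ¬ (b : ℕ) = (j : ℕ) + 1 := by
            intro e
            apply hj
            apply Fin.ext
            simp [e]
          simp [this]
        · simp
    · simp [layerAdj, hq]

theorem monB_pow_zero (n L : ℕ) (K : ℕ → ℕ → ℕ → Bool) (k : ℕ) :
    ∀ p q : Fin n, (q : ℕ) < (p : ℕ) + k → (monB n L K ^ k) p q = 0 := by
  induction k with
  | zero =>
    intro p q h
    rw [pow_zero, Matrix.one_apply_ne]
    rintro rfl
    simp at h
  | succ k ih =>
    intro p q h
    rw [pow_succ', Matrix.mul_apply]
    apply Finset.sum_eq_zero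
    intro r _
    by_cases hr : p < r
    · have := Fin.lt_def.1 hr
      rw [ih r q (by omega), mul_zero]
    · simp [monB, hr]

/-- number of paths in `B`, including the trivial one -/
def gB (n L : ℕ) (K : ℕ → ℕ → ℕ → Bool) (p q : Fin n) : ℕ :=
  ∑ k ∈ Finset.range n, (monB n L K ^ k) p q

theorem gB_rec (n L : ℕ) (K : ℕ → ℕ → ℕ → Bool) (p q : Fin n) (h : p ≠ q) :
    gB n L K p q = ∑ r, monB n L K p r * gB n L K r q := by
  have h1 : gB n L K p q = ∑ k ∈ Finset.range (n + 1), (monB n L K ^ k) p q := by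
    rw [Finset.sum_range_succ, monB_pow_zero n L K n p q (by omega)]; rfl
  rw [h1, Finset.sum_range_succ', pow_zero, Matrix.one_apply_ne h, add_zero]
  simp only [gB, Finset.mul_sum]
  rw [Finset.sum_comm]
  apply Finset.sum_congr rfl
  intro k _
  rw [pow_succ', Matrix.mul_apply]

theorem gB_self (n L : ℕ) (K : ℕ → ℕ → ℕ → Bool) (p : Fin n) :
    gB n L K p p = 1 := by
  have hn := p.isLt
  obtain ⟨m, rfl⟩ : ∃ m, n = m + 1 := ⟨n - 1, by omega⟩
  rw [gB, Finset.sum_range_succ', pow_zero, Matrix.one_apply_eq, Finset.sum_eq_zero, zero_add]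
  intro k _
  exact monB_pow_zero _ L K _ p p (by omega)

theorem main_ind (n L : ℕ) (hn : 2 ≤ n) (K : ℕ → ℕ → ℕ → Bool) (m : ℕ) :
    ∀ (t : ℕ) (ht : t + m = n - 1) (q : Fin n),
      (((q : ℕ) < t → (layerAdj n L K ^ (2 * m)) (⟨2 * t, by omega⟩, Sum.inl q)
        (⟨2 * n - 2, by omega⟩, Sum.inl (⟨n - 1, by omega⟩ : Fin n)) = 0) ∧
      (t ≤ (q : ℕ) → (((layerAdj n L K ^ (2 * m)) (⟨2 * t, by omega⟩, Sum.inl q)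
        (⟨2 * n - 2, by omega⟩, Sum.inl (⟨n - 1, by omega⟩ : Fin n)) : ℕ) : ZMod 2) =
          (gB n L K q ⟨n - 1, by omega⟩ : ℕ))) := by
  induction m with
  | zero =>
    intro t ht q
    have hq := q.isLt
    constructor
    · intro h
      rw [mul_zero, pow_zero, Matrix.one_apply_ne]
      intro e
      simp only [Prod.mk.injEq, Sum.inl.injEq, Fin.ext_iff] at e
      omega
    · intro h
      have e : q = ⟨n - 1, by omega⟩ := Fin.ext (by simp only; omega)
      have e2 : (⟨2 * t, by omega⟩ : Fin (2 * n - 1)) = ⟨2 * n - 2, by omega⟩ :=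
        Fin.ext (by simp only; omega)
      rw [mul_zero, pow_zero, e2, ← e, Matrix.one_apply_eq, gB_self]
  | succ m ih =>
    intro t ht q
    have hq := q.isLt
    have ih := ih (t + 1) (by omega)
    rw [show 2 * (m + 1) = 2 * m + 2 by ring,
      lay_two n L K t (by omega) (by omega)]
    constructor
    · intro h
      rw [(ih q).1 (by omega), if_neg (by omega)]
    · intro h
      by_cases hqt : (q : ℕ) = t
      · rw [(ih q).1 (by omega), if_pos hqt, gB_rec _ _ _ _ _ (by
          intro e; rw [Fin.ext_iff] at e; simp only at e; omega), zero_add]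
        rw [Nat.cast_sum, Nat.cast_sum]
        apply Finset.sum_congr rfl
        intro b _
        by_cases hb : q < b
        · have := Fin.lt_def.1 hb
          rw [Nat.cast_mul, Nat.cast_mul, (ih b).2 (by omega)]
          congr 1
          simp only [monB, Matrix.of_apply, if_pos hb, ZMod.natCast_mod]
        · simp [monB, hb]
      · rw [if_neg hqt, add_zero, (ih q).2 (by omega)]

/-- For every `i`, the number of directed paths in the layered graph `C` from vertex
`i` in layer `N_i` to vertex `n` in layer `N_n` is congruent modulo 2 to the number of
directed paths from vertex `i` to vertex `n` in the monotone DAG `B`. -/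
theorem stmt9 (n L : ℕ) (hn : 2 ≤ n) (hL : 1 ≤ L) (K : ℕ → ℕ → ℕ → Bool) (i : Fin n) :
    (∑ k ∈ Finset.Icc 1 (2 * n - 2),
        ((layerAdj n L K) ^ k)
          ((⟨2 * (i : ℕ), by have := i.isLt; omega⟩ : Fin (2 * n - 1)), Sum.inl i)
          ((⟨2 * n - 2, by omega⟩ : Fin (2 * n - 1)),
            Sum.inl (⟨n - 1, by omega⟩ : Fin n))) ≡
      (∑ k ∈ Finset.Icc 1 (n - 1),
        ((monB n L K) ^ k) i (⟨n - 1, by omega⟩ : Fin n))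
      [MOD 2] := by
  have hi := i.isLt
  rw [← ZMod.natCast_eq_natCast_iff]
  by_cases hl : (i : ℕ) = n - 1
  · rw [Finset.sum_eq_zero, Finset.sum_eq_zero]
    · intro k hk
      rw [Finset.mem_Icc] at hk
      exact monB_pow_zero _ _ _ _ _ _ (by simp only; omega)
    · intro k hk
      rw [Finset.mem_Icc] at hk
      exact lay_pow_zero _ _ _ _ _ _ (by simp only; omega)
  · rw [Finset.sum_eq_single (2 * (n - 1 - (i : ℕ)))]
    · rw [(main_ind n L hn K (n - 1 - (i : ℕ)) i (by omega) i).2 le_rfl]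
      congr 1
      obtain ⟨m, rfl⟩ : ∃ m, n = m + 1 := ⟨n - 1, by omega⟩
      rw [gB, Finset.sum_range_succ', pow_zero, Matrix.one_apply_ne (by
        intro e; rw [Fin.ext_iff] at e; exact hl e), add_zero]
      rw [Finset.range_eq_Ico, Finset.sum_Ico_add' (fun k => (monB (m + 1) L K ^ k) i _) 0 m 1]
      rfl
    · intro k _ hk
      exact lay_pow_zero _ _ _ _ _ _ (by simp only; omega)
    · intro h
      exfalso
      apply h
      rw [Finset.mem_Icc]
      omega
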